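/- For every pair of natural numbers t, n ≥ 3 there exists a natural number h such that every finite family of more than h pairwise distinct nonempty compact convex subsets of ℝ² contains either a subfamily of t members that admit a common transversal line, or a subfamily of n members in convex position. -/

import Mathlib

open Set

noncomputable section

/-- The Euclidean plane. -/
abbrev Plane : Type := EuclideanSpace ℝ (Fin 2)

/-- The 2×2 determinant of two plane vectors. -/
def det2 (u v : Plane) : ℝ := u 0 * v 1 - u 1 * v 0

/-- A convex body in the plane: nonempty, compact and convex. -/
def ConvexBody2 (A : Set Plane) : Prop := A.Nonempty ∧ IsCompact A ∧ Convex ℝ A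

/-- A family of sets is in convex position if removing any member changes the
convex hull of the union of the family. -/
def ConvexPos (F : Set (Set Plane)) : Prop :=
  ∀ A ∈ F, convexHull ℝ (⋃₀ F) ≠ convexHull ℝ (⋃₀ (F \ {A}))

/-- A family is in general position if every 3-element subfamily is in convex position. -/
def GenPos (F : Set (Set Plane)) : Prop :=
  ∀ G ⊆ F, G.ncard = 3 → ConvexPos G

/-- Two sets are noncrossing if both set differences are connected. -/
def NoncrossingPair (A B : Set Plane) : Prop := IsConnected (A \ B) ∧ IsConnected (B \ A)

/-- Two convex bodies are tangent if they intersect but their interiors are disjoint. -/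
def TangentBodies (A B : Set Plane) : Prop :=
  (A ∩ B).Nonempty ∧ interior A ∩ interior B = ∅

/-- The line `{x | f x = c}` (for `f ≠ 0`) is tangent to `A`:
it meets `A` and `A` lies in one of the two closed half-planes it bounds. -/
def TangentLineTo (f : Plane →ₗ[ℝ] ℝ) (c : ℝ) (A : Set Plane) : Prop :=
  (∃ x ∈ A, f x = c) ∧ ((∀ x ∈ A, f x ≤ c) ∨ (∀ x ∈ A, c ≤ f x))

/-- No line is tangent to three distinct members of the family. -/
def NoTripleTangentLine (F : Set (Set Plane)) : Prop :=
  ∀ f : Plane →ₗ[ℝ] ℝ, f ≠ 0 → ∀ c : ℝ, ∀ A ∈ F, ∀ B ∈ F, ∀ C ∈ F,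
    A ≠ B → B ≠ C → A ≠ C →
    ¬ (TangentLineTo f c A ∧ TangentLineTo f c B ∧ TangentLineTo f c C)

/-- The ordered triple `(A₁, A₂, A₃)` is counterclockwise oriented. -/
def CCWOriented (A₁ A₂ A₃ : Set Plane) : Prop :=
  ∃ a₁ ∈ A₁ ∩ frontier (convexHull ℝ (A₁ ∪ A₂ ∪ A₃)),
  ∃ a₂ ∈ A₂ ∩ frontier (convexHull ℝ (A₁ ∪ A₂ ∪ A₃)),
  ∃ a₃ ∈ A₃ ∩ frontier (convexHull ℝ (A₁ ∪ A₂ ∪ A₃)),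
    0 < det2 (a₂ - a₁) (a₃ - a₁)

/-- The ordered triple `(A₁, A₂, A₃)` is clockwise oriented. -/
def CWOriented (A₁ A₂ A₃ : Set Plane) : Prop :=
  ∃ a₁ ∈ A₁ ∩ frontier (convexHull ℝ (A₁ ∪ A₂ ∪ A₃)),
  ∃ a₂ ∈ A₂ ∩ frontier (convexHull ℝ (A₁ ∪ A₂ ∪ A₃)),
  ∃ a₃ ∈ A₃ ∩ frontier (convexHull ℝ (A₁ ∪ A₂ ∪ A₃)),
    det2 (a₂ - a₁) (a₃ - a₁) < 0

/-- An affine line in the plane: an affine subspace with 1-dimensional direction. -/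
def IsLine (L : AffineSubspace ℝ Plane) : Prop := Module.finrank ℝ L.direction = 1

/-- `L` is a transversal line of the family `F`. -/
def TransversalLine (L : AffineSubspace ℝ Plane) (F : Set (Set Plane)) : Prop :=
  IsLine L ∧ ∀ A ∈ F, ((L : Set Plane) ∩ A).Nonempty

/-!
By Ramsey's theorem for pairs one may assume that the projections of the members to the `x`-axis
pairwise meet, and Helly's theorem on the line gives a vertical transversal, or that the members are
ordered strictly from left to right. In the ordered case, a triple `A, B, C` without a common
transversal has a constant orientation, because the orientation determinant does not vanish on the
connected set `A × B × C`. By Ramsey's theorem for triples, either all triples have a common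
transversal or all of them have the same orientation.

In the first case the proof of Hadwiger's transversal theorem applies: the slopes of the lines
meeting two given members form an interval, these intervals pairwise intersect, and the projections
of the members along a common slope pairwise intersect as well. In the second case the members are
arranged along a convex or concave chain, and no point of a member lies in the convex hull of the
others.
-/

open scoped List

/-! ### Ramsey's theorem -/

theorem exists_le_length_filter_of_mul_le_length {ι β : Type*} [Fintype ι] [Nonempty ι]
    [DecidableEq ι] (f : β → ι) {m : ℕ} {l : List β} (h : Fintype.card ι * m ≤ l.length) :
    ∃ i, m ≤ (l.filter (f · = i)).length := by
  have hsum : ∑ i : ι, (l.filter (f · = i)).length = l.length := by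
    have := Multiset.sum_count_eq_card (s := Finset.univ) (m := (l.map f : Multiset ι)) (by simp)
    simpa [List.count_eq_length_filter, List.filter_map, Function.comp_def, beq_eq_decide]
      using this
  obtain ⟨i, -, hi⟩ := Finset.exists_le_of_sum_le Finset.univ_nonempty
    (f := fun _ => m) (g := fun i => (l.filter (f · = i)).length) (by simpa [hsum] using h)
  exact ⟨i, hi⟩

/-- Ramsey's theorem for `r`-tuples listed in order: if the `r`-element sublists of a long list are
covered by classes `P i`, then a long sublist has all its `r`-element sublists in one class.
The classes may overlap, so a colouring is the special case of a partition. -/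
def RamseyProperty (ι α : Type*) (r : ℕ) : Prop :=
  ∀ m : ℕ, ∃ N : ℕ, ∀ (P : ι → List α → Prop) (l : List α), N ≤ l.length →
    (∀ e, e <+ l → e.length = r → ∃ i, P i e) →
    ∃ t, t <+ l ∧ t.length = m ∧ ∃ i, ∀ e, e <+ t → e.length = r → P i e

theorem ramseyProperty_zero (ι α : Type*) : RamseyProperty ι α 0 := by
  refine fun m => ⟨m, fun P l hl hP => ?_⟩
  obtain ⟨i, hi⟩ := hP [] (List.nil_sublist l) rfl
  refine ⟨l.take m, List.take_sublist m l, List.length_take_of_le hl, i, fun e _ he => ?_⟩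
  rwa [List.eq_nil_of_length_eq_zero he]

-- The sublist is listed with labels: the class of a tuple is the label of its first entry.
theorem RamseyProperty.exists_labelled_sublist {ι α : Type*} {r : ℕ} (hr : RamseyProperty ι α r)
    (m : ℕ) : ∃ N : ℕ, ∀ (P : ι → List α → Prop) (l : List α), N ≤ l.length →
      (∀ e, e <+ l → e.length = r + 1 → ∃ i, P i e) →
      ∃ u : List (ι × α), u.map Prod.snd <+ l ∧ u.length = m ∧
        ∀ i x e, (i, x) :: e <+ u → e.length = r → P i (x :: e.map Prod.snd) := by
  induction m with
  | zero => exact ⟨0, fun P l _ _ => ⟨[], by simp, rfl, by simp⟩⟩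
  | succ m ih =>
    obtain ⟨N, hN⟩ := ih
    obtain ⟨M, hM⟩ := hr N
    refine ⟨M + 1, fun P l hl hP => ?_⟩
    obtain ⟨x₀, l, rfl⟩ := List.exists_cons_of_length_pos (by omega : 0 < l.length)
    obtain ⟨t, htl, ht, i₀, hi₀⟩ := hM (fun i e => P i (x₀ :: e)) l (by simpa using hl)
      fun e he hlen => hP _ (he.cons_cons x₀) (by simp [hlen])
    obtain ⟨u, hut, hu, hP'⟩ := hN P t ht.ge
      fun e he => hP e ((he.trans htl).cons x₀)
    refine ⟨(i₀, x₀) :: u, (hut.trans htl).cons_cons x₀, by simp [hu], fun i x e he hlen => ?_⟩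
    rcases List.sublist_cons_iff.1 he with he | ⟨e', he', heu⟩
    · exact hP' i x e he hlen
    · obtain ⟨⟨rfl, rfl⟩, rfl⟩ : (i = i₀ ∧ x = x₀) ∧ e = e' := by simpa using he'
      exact hi₀ _ ((heu.map Prod.snd).trans hut) (by simpa using hlen)

theorem RamseyProperty.succ {ι α : Type*} [Finite ι] [Nonempty ι] {r : ℕ}
    (hr : RamseyProperty ι α r) : RamseyProperty ι α (r + 1) := by
  classical
  cases nonempty_fintype ι
  intro m
  obtain ⟨N, hN⟩ := hr.exists_labelled_sublist (Fintype.card ι * m)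
  refine ⟨N, fun P l hl hP => ?_⟩
  obtain ⟨u, hul, hu, hP'⟩ := hN P l hl hP
  obtain ⟨i, hi⟩ := exists_le_length_filter_of_mul_le_length Prod.fst hu.ge
  set v := u.filter (·.1 = i)
  refine ⟨(v.take m).map Prod.snd, (((List.take_sublist m v).trans List.filter_sublist).map _).trans
    hul, by simpa using hi, i, fun e he hlen => ?_⟩
  obtain ⟨e, hev, rfl⟩ := List.sublist_map_iff.1 he
  replace hev : e <+ v := hev.trans (List.take_sublist m v)
  obtain ⟨⟨j, x⟩, e, rfl⟩ := List.exists_cons_of_length_eq_add_one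
    ((List.length_map Prod.snd).symm.trans hlen)
  obtain rfl : j = i := by simpa [v] using (List.mem_filter.1 (hev.subset List.mem_cons_self)).2
  exact hP' j x e (hev.trans List.filter_sublist) (by simpa using hlen)

theorem ramseyProperty (ι α : Type*) [Finite ι] [Nonempty ι] :
    ∀ r, RamseyProperty ι α r
  | 0 => ramseyProperty_zero ι α
  | r + 1 => (ramseyProperty ι α r).succ

theorem exists_subset_forall_of_forall_exists {ι α : Type*} [Finite ι] [Nonempty ι] (r : ℕ)
    (m : ι → ℕ) : ∃ N : ℕ, ∀ (P : ι → Finset α → Prop) (s : Finset α), N ≤ s.card →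
      (∀ e ⊆ s, e.card = r → ∃ i, P i e) →
      ∃ i, ∃ t ⊆ s, t.card = m i ∧ ∀ e ⊆ t, e.card = r → P i e := by
  classical
  cases nonempty_fintype ι
  obtain ⟨N, hN⟩ := ramseyProperty ι α r (Finset.univ.sup m)
  refine ⟨N, fun P s hs hP => ?_⟩
  have hnodup {e : List α} (he : e <+ s.toList) : e.toFinset.card = e.length :=
    List.toFinset_card_of_nodup (s.nodup_toList.sublist he)
  obtain ⟨l, hls, hl, i, hi⟩ := hN (fun i e => P i e.toFinset) s.toList (by simpa using hs)
    fun e he hlen => hP _ (fun x hx => Finset.mem_toList.1 <| he.subset <| List.mem_toFinset.1 hx)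
      ((hnodup he).trans hlen)
  obtain ⟨t, htl, ht⟩ := Finset.exists_subset_card_eq (s := l.toFinset)
    ((Finset.le_sup (Finset.mem_univ i)).trans_eq (hl.symm.trans (hnodup hls).symm))
  refine ⟨i, t, fun x hx => Finset.mem_toList.1 <| hls.subset <| List.mem_toFinset.1 <| htl hx, ht,
    fun e het he => ?_⟩
  have hel : (l.filter (· ∈ e)).toFinset = e := by
    ext x
    simpa using fun hx => List.mem_toFinset.1 (htl (het hx))
  have hsub : l.filter (· ∈ e) <+ l := List.filter_sublist
  simpa only [hel] using hi _ hsub (by rw [← hnodup (hsub.trans hls), hel, he])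

/-! ### Connected sets on the line -/

theorem exists_eq_or_forall_lt_or_forall_gt {X α : Type*} [TopologicalSpace X] [LinearOrder α]
    [TopologicalSpace α] [OrderClosedTopology α] {s : Set X} (hs : IsPreconnected s) {f g : X → α}
    (hf : ContinuousOn f s) (hg : ContinuousOn g s) :
    (∃ x ∈ s, f x = g x) ∨ (∀ x ∈ s, f x < g x) ∨ ∀ x ∈ s, g x < f x := by
  by_contra! ⟨hne, ⟨x, hx, hgf⟩, y, hy, hfg⟩
  obtain ⟨z, hz, h⟩ := hs.intermediate_value₂ hy hx hf hg hfg hgf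
  exact hne z hz h

theorem exists_forall_mem_of_pairwise_inter_nonempty {𝕜 ι : Type*} [Field 𝕜] [LinearOrder 𝕜]
    [IsStrictOrderedRing 𝕜] {s : Finset ι} {F : ι → Set 𝕜} (hF : ∀ i ∈ s, (F i).OrdConnected)
    (h : ∀ i ∈ s, ∀ j ∈ s, (F i ∩ F j).Nonempty) : ∃ x, ∀ i ∈ s, x ∈ F i := by
  classical
  have hinter : (⋂ i ∈ s, F i).Nonempty := by
    refine Convex.helly_theorem' (𝕜 := 𝕜) (fun i hi => (hF i hi).convex) fun I hI hcard => ?_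
    rcases I.eq_empty_or_nonempty with rfl | hne
    · simp
    have hcard₂ : I.card ≤ 2 := by simpa using hcard
    obtain ⟨i, j, rfl⟩ : ∃ i j, I = {i, j} := by
      have := hne.card_pos
      interval_cases hc : I.card
      · obtain ⟨i, rfl⟩ := Finset.card_eq_one.1 hc
        exact ⟨i, i, by simp⟩
      · obtain ⟨i, j, -, rfl⟩ := Finset.card_eq_two.1 hc
        exact ⟨i, j, rfl⟩
    simpa using h i (hI (by simp)) j (hI (by simp))
  simpa [Set.Nonempty] using hinter

/-! ### Transversal lines of a given direction -/

theorem exists_transversalLine_of_forall_mem_image {f : Plane →L[ℝ] ℝ} (hf : f ≠ 0) {c : ℝ}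
    {G : Set (Set Plane)} (h : ∀ A ∈ G, c ∈ f '' A) :
    ∃ L : AffineSubspace ℝ Plane, TransversalLine L G := by
  have hf' : (f : Plane →ₗ[ℝ] ℝ) ≠ 0 := fun h => hf (ContinuousLinearMap.coe_injective h)
  obtain ⟨o, ho⟩ := LinearMap.surjective hf' c
  refine ⟨AffineSubspace.mk' o (LinearMap.ker (f : Plane →ₗ[ℝ] ℝ)), ?_, fun A hA => ?_⟩
  · have := Module.Dual.finrank_ker_add_one_of_ne_zero hf'
    rw [finrank_euclideanSpace_fin] at this
    rw [IsLine, AffineSubspace.direction_mk']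
    omega
  · obtain ⟨p, hp, hpc⟩ := h A hA
    refine ⟨p, ?_, hp⟩
    simp only [ContinuousLinearMap.coe_coe] at ho
    simp [AffineSubspace.mem_mk', hpc, ho]

theorem exists_transversalLine_of_pairwise_image_inter_nonempty {f : Plane →L[ℝ] ℝ} (hf : f ≠ 0)
    {G : Set (Set Plane)} (hfin : G.Finite) (hconn : ∀ A ∈ G, IsPreconnected A)
    (h : ∀ A ∈ G, ∀ B ∈ G, (f '' A ∩ f '' B).Nonempty) :
    ∃ L : AffineSubspace ℝ Plane, TransversalLine L G := by
  obtain ⟨c, hc⟩ := exists_forall_mem_of_pairwise_inter_nonempty (s := hfin.toFinset)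
    (F := fun A => f '' A)
    (fun A hA => ((hconn A (by simpa using hA)).image f f.continuous.continuousOn).ordConnected)
    (by simpa using h)
  exact exists_transversalLine_of_forall_mem_image hf (c := c) (by simpa using hc)

/-- The first coordinate, as a linear functional; its level sets are the vertical lines. -/
def xCoord : Plane →L[ℝ] ℝ := EuclideanSpace.proj 0

@[simp]
theorem xCoord_apply (p : Plane) : xCoord p = p 0 := rfl

theorem xCoord_ne_zero : xCoord ≠ 0 :=
  fun h => by simpa using DFunLike.congr_fun h !₂[1, 0]

/-- The functional sending `p` to the intercept on the `y`-axis of the line of slope `m` through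
`p`; its level sets are the lines of slope `m`. -/
def yIntercept (m : ℝ) : Plane →L[ℝ] ℝ := EuclideanSpace.proj 1 - m • EuclideanSpace.proj 0

@[simp]
theorem yIntercept_apply (m : ℝ) (p : Plane) : yIntercept m p = p 1 - m * p 0 := rfl

theorem yIntercept_ne_zero (m : ℝ) : yIntercept m ≠ 0 :=
  fun h => by simpa using DFunLike.congr_fun h !₂[0, 1]

/-- The members of `G` have a common non-vertical transversal line. -/
def HasSlopedTransversal (G : Set (Set Plane)) : Prop :=
  ∃ m c : ℝ, ∀ A ∈ G, c ∈ yIntercept m '' A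

theorem HasSlopedTransversal.mono {G H : Set (Set Plane)} (h : HasSlopedTransversal H)
    (hGH : G ⊆ H) : HasSlopedTransversal G := by
  obtain ⟨m, c, hc⟩ := h
  exact ⟨m, c, fun A hA => hc A (hGH hA)⟩

/-! ### Slopes of chords -/

/-- The slope of the line through `p` and `q`; it is `0` by convention if the line is vertical. -/
def chordSlope (p q : Plane) : ℝ := (q 1 - p 1) / (q 0 - p 0)

section ChordSlope

variable {p q : Plane} {m : ℝ}

theorem chordSlope_eq_iff (h : p 0 < q 0) :
    chordSlope p q = m ↔ yIntercept m p = yIntercept m q := by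
  rw [chordSlope, div_eq_iff (sub_pos.2 h).ne', yIntercept_apply, yIntercept_apply]
  constructor <;> intro h <;> linarith

theorem le_chordSlope_iff (h : p 0 < q 0) :
    m ≤ chordSlope p q ↔ yIntercept m p ≤ yIntercept m q := by
  rw [chordSlope, le_div_iff₀ (sub_pos.2 h), yIntercept_apply, yIntercept_apply]
  constructor <;> intro h <;> linarith

theorem chordSlope_le_iff (h : p 0 < q 0) :
    chordSlope p q ≤ m ↔ yIntercept m q ≤ yIntercept m p := by
  rw [chordSlope, div_le_iff₀ (sub_pos.2 h), yIntercept_apply, yIntercept_apply]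
  constructor <;> intro h <;> linarith

end ChordSlope

/-- `A` lies strictly to the left of `B`; either set may be empty. -/
def LeftOf (A B : Set Plane) : Prop := ∀ a ∈ A, ∀ b ∈ B, a 0 < b 0

theorem LeftOf.ne {A B : Set Plane} (h : LeftOf A B) (hA : A.Nonempty) : A ≠ B := by
  rintro rfl
  obtain ⟨a, ha⟩ := hA
  exact lt_irrefl _ (h a ha a ha)

theorem LeftOf.asymm {A B : Set Plane} (h : LeftOf A B) (hA : A.Nonempty) (hB : B.Nonempty) :
    ¬ LeftOf B A := by
  obtain ⟨a, ha⟩ := hA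
  obtain ⟨b, hb⟩ := hB
  exact fun h' => (h a ha b hb).asymm (h' b hb a ha)

theorem LeftOf.trans {A B C : Set Plane} (hAB : LeftOf A B) (hBC : LeftOf B C)
    (hB : B.Nonempty) : LeftOf A C := by
  obtain ⟨b, hb⟩ := hB
  exact fun a ha c hc => (hAB a ha b hb).trans (hBC b hb c hc)

/-- `A` and `B` are strictly separated by their `x`-coordinates, in either order. -/
def XSeparated (A B : Set Plane) : Prop := LeftOf A B ∨ LeftOf B A

theorem XSeparated.symm {A B : Set Plane} (h : XSeparated A B) : XSeparated B A := Or.symm h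

theorem xCoord_image_inter_nonempty_or_xSeparated {A B : Set Plane} (hA : IsPreconnected A)
    (hB : IsPreconnected B) :
    (xCoord '' A ∩ xCoord '' B).Nonempty ∨ XSeparated A B := by
  rcases exists_eq_or_forall_lt_or_forall_gt (hA.prod hB) (f := fun z => z.1 0)
    (g := fun z => z.2 0) (by fun_prop) (by fun_prop) with ⟨z, hz, h⟩ | h | h
  · exact .inl ⟨z.1 0, ⟨z.1, hz.1, rfl⟩, z.2, hz.2, h.symm⟩
  · exact .inr <| .inl fun a ha b hb => h (a, b) ⟨ha, hb⟩
  · exact .inr <| .inr fun b hb a ha => h (a, b) ⟨ha, hb⟩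

/-- The slopes of the non-vertical lines that meet both `A` and `B`. -/
def slopes (A B : Set Plane) : Set ℝ :=
  {m | (yIntercept m '' A ∩ yIntercept m '' B).Nonempty}

theorem slopes_comm (A B : Set Plane) : slopes A B = slopes B A := by
  simp only [slopes, inter_comm]

theorem slopes_self {A : Set Plane} (hA : A.Nonempty) : slopes A A = univ := by
  simpa [slopes, eq_univ_iff_forall] using hA

theorem LeftOf.slopes_eq {A B : Set Plane} (h : LeftOf A B) :
    slopes A B = image2 chordSlope A B := by
  ext m
  constructor
  · rintro ⟨_, ⟨a, ha, rfl⟩, b, hb, hba⟩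
    exact ⟨a, ha, b, hb, (chordSlope_eq_iff (h a ha b hb)).2 hba.symm⟩
  · rintro ⟨a, ha, b, hb, hm⟩
    exact ⟨_, mem_image_of_mem _ ha, b, hb, ((chordSlope_eq_iff (h a ha b hb)).1 hm).symm⟩

theorem LeftOf.isPreconnected_slopes {A B : Set Plane} (h : LeftOf A B) (hA : IsPreconnected A)
    (hB : IsPreconnected B) : IsPreconnected (slopes A B) := by
  rw [h.slopes_eq, ← image_uncurry_prod]
  refine (hA.prod hB).image _ (ContinuousOn.div (by fun_prop) (by fun_prop) fun z hz => ?_)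
  exact (sub_pos.2 (h z.1 hz.1 z.2 hz.2)).ne'

theorem ordConnected_slopes {G : Set (Set Plane)} (hG : ∀ A ∈ G, IsConnected A)
    (hlr : G.Pairwise XSeparated) {A B : Set Plane} (hA : A ∈ G)
    (hB : B ∈ G) : (slopes A B).OrdConnected := by
  have hAp := (hG A hA).isPreconnected
  have hBp := (hG B hB).isPreconnected
  rcases eq_or_ne A B with rfl | hne
  · simpa only [slopes_self (hG A hA).nonempty] using ordConnected_univ
  rcases hlr hA hB hne with h | h
  · exact (h.isPreconnected_slopes hAp hBp).ordConnected
  · rw [slopes_comm]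
    exact (h.isPreconnected_slopes hBp hAp).ordConnected

theorem HasSlopedTransversal.exists_forall_mem_slopes {G : Set (Set Plane)}
    (h : HasSlopedTransversal G) : ∃ m, ∀ A ∈ G, ∀ B ∈ G, m ∈ slopes A B := by
  obtain ⟨m, c, hc⟩ := h
  exact ⟨m, fun A hA B hB => ⟨c, hc A hA, hc B hB⟩⟩

/-! ### Hadwiger's transversal theorem -/

theorem not_forall_slopes_lt_slopes {A B C D : Set Plane} (hAB : LeftOf A B) (hCD : LeftOf C D)
    (hAC : (slopes A C).OrdConnected) (hBD : (slopes B D).OrdConnected)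
    (hABC : (slopes A B ∩ slopes A C).Nonempty) (hABD : (slopes A B ∩ slopes B D).Nonempty)
    (hACD : (slopes C D ∩ slopes A C).Nonempty) (hBCD : (slopes C D ∩ slopes B D).Nonempty) :
    ¬ ∀ x ∈ slopes C D, ∀ y ∈ slopes A B, x < y := by
  intro hlt
  obtain ⟨m, hCDm, hmAB⟩ : (upperBounds (slopes C D) ∩ lowerBounds (slopes A B)).Nonempty :=
    exists_between_of_forall_le hACD.left hABC.left fun x hx y hy => (hlt x hx y hy).le
  -- A line of slope `m` meets `A` and `C`, another one meets `B` and `D`; comparing intercepts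
  -- along `A`, `B`, `D`, `C` shows that the two lines coincide.
  obtain ⟨_, ⟨a, ha, rfl⟩, c, hc, hac⟩ : m ∈ slopes A C := by
    obtain ⟨x, hx, hxAC⟩ := hACD
    obtain ⟨y, hy, hyAC⟩ := hABC
    exact hAC.out hxAC hyAC ⟨hCDm hx, hmAB hy⟩
  obtain ⟨_, ⟨b, hb, rfl⟩, d, hd, hbd⟩ : m ∈ slopes B D := by
    obtain ⟨x, hx, hxBD⟩ := hBCD
    obtain ⟨y, hy, hyBD⟩ := hABD
    exact hBD.out hxBD hyBD ⟨hCDm hx, hmAB hy⟩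
  have hab : yIntercept m a ≤ yIntercept m b := (le_chordSlope_iff (hAB a ha b hb)).1 <|
    hmAB <| hAB.slopes_eq ▸ mem_image2_of_mem ha hb
  have hdc : yIntercept m d ≤ yIntercept m c := (chordSlope_le_iff (hCD c hc d hd)).1 <|
    hCDm <| hCD.slopes_eq ▸ mem_image2_of_mem hc hd
  exact lt_irrefl m <| hlt m ⟨_, mem_image_of_mem _ hc, d, hd, by linarith⟩ m
    ⟨_, mem_image_of_mem _ ha, b, hb, by linarith⟩

section Hadwiger

variable {G : Set (Set Plane)} (hconn : ∀ A ∈ G, IsConnected A)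
  (hlr : G.Pairwise XSeparated)
  (htrip : ∀ A ∈ G, ∀ B ∈ G, ∀ C ∈ G, HasSlopedTransversal {A, B, C})

include hconn hlr htrip

theorem slopes_inter_slopes_nonempty {A B C D : Set Plane} (hA : A ∈ G) (hB : B ∈ G) (hC : C ∈ G)
    (hD : D ∈ G) (hAB : LeftOf A B) (hCD : LeftOf C D) :
    (slopes A B ∩ slopes C D).Nonempty := by
  have hmeet {X Y Z : Set Plane} (hX : X ∈ G) (hY : Y ∈ G) (hZ : Z ∈ G) :
      ∃ m, m ∈ slopes X Y ∧ m ∈ slopes X Z ∧ m ∈ slopes Y Z := by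
    obtain ⟨m, hm⟩ := (htrip X hX Y hY Z hZ).exists_forall_mem_slopes
    exact ⟨m, hm _ (by simp) _ (by simp), hm _ (by simp) _ (by simp), hm _ (by simp) _ (by simp)⟩
  have hAC := ordConnected_slopes hconn hlr hA hC
  have hBD := ordConnected_slopes hconn hlr hB hD
  have hABC : (slopes A B ∩ slopes A C).Nonempty := (hmeet hA hB hC).imp fun m h => ⟨h.1, h.2.1⟩
  have hABD : (slopes A B ∩ slopes B D).Nonempty := (hmeet hA hB hD).imp fun m h => ⟨h.1, h.2.2⟩
  have hACD : (slopes C D ∩ slopes A C).Nonempty := (hmeet hA hC hD).imp fun m h => ⟨h.2.2, h.1⟩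
  have hBCD : (slopes C D ∩ slopes B D).Nonempty := (hmeet hB hC hD).imp fun m h => ⟨h.2.2, h.2.1⟩
  have hpre : IsPreconnected (slopes A B ×ˢ slopes C D) :=
    (hAB.isPreconnected_slopes (hconn A hA).isPreconnected (hconn B hB).isPreconnected).prod
      (hCD.isPreconnected_slopes (hconn C hC).isPreconnected (hconn D hD).isPreconnected)
  rcases exists_eq_or_forall_lt_or_forall_gt hpre (f := Prod.fst) (g := Prod.snd) (by fun_prop)
    (by fun_prop) with ⟨⟨x, y⟩, ⟨hx, hy⟩, rfl : x = y⟩ | hlt | hlt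
  · exact ⟨x, hx, hy⟩
  · rw [slopes_comm A C] at hAC hABC hACD
    rw [slopes_comm B D] at hBD hABD hBCD
    exact absurd (fun x hx y hy => hlt (x, y) ⟨hx, hy⟩)
      (not_forall_slopes_lt_slopes hCD hAB hAC hBD hACD hBCD hABC hABD)
  · exact absurd (fun y hy x hx => hlt (x, y) ⟨hx, hy⟩)
      (not_forall_slopes_lt_slopes hAB hCD hAC hBD hABC hABD hACD hBCD)

theorem exists_transversalLine_of_forall_hasSlopedTransversal (hfin : G.Finite) :
    ∃ L : AffineSubspace ℝ Plane, TransversalLine L G := by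
  classical
  obtain ⟨m, hm⟩ := exists_forall_mem_of_pairwise_inter_nonempty
    (s := {p ∈ hfin.toFinset ×ˢ hfin.toFinset | LeftOf p.1 p.2})
    (F := fun p => slopes p.1 p.2)
    (fun p hp => by
      simp only [Finset.mem_filter, Finset.mem_product, Finite.mem_toFinset] at hp
      exact ordConnected_slopes hconn hlr hp.1.1 hp.1.2)
    (fun p hp q hq => by
      simp only [Finset.mem_filter, Finset.mem_product, Finite.mem_toFinset] at hp hq
      exact slopes_inter_slopes_nonempty hconn hlr htrip hp.1.1 hp.1.2 hq.1.1 hq.1.2 hp.2 hq.2)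
  replace hm : ∀ A ∈ G, ∀ B ∈ G, LeftOf A B → m ∈ slopes A B := fun A hA B hB h =>
    hm (A, B) (by simp [hA, hB, h])
  refine exists_transversalLine_of_pairwise_image_inter_nonempty (yIntercept_ne_zero m) hfin
    (fun A hA => (hconn A hA).isPreconnected) fun A hA B hB => show m ∈ slopes A B from ?_
  rcases eq_or_ne A B with rfl | hne
  · simp [slopes_self (hconn A hA).nonempty]
  rcases hlr hA hB hne with h | h
  · exact hm A hA B hB h
  · exact slopes_comm A B ▸ hm B hB A hA h

end Hadwiger

/-! ### Orientation and convex position -/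

/-- Every path `a, b, c` with `a ∈ A`, `b ∈ B`, `c ∈ C` turns left if `σ` is positive, and right if
`σ` is negative. -/
def Orients (σ : ℝ) (A B C : Set Plane) : Prop :=
  ∀ a ∈ A, ∀ b ∈ B, ∀ c ∈ C, 0 < σ * det2 (b - a) (c - b)

theorem yIntercept_chordSlope_of_det2_eq_zero {a b c : Plane} (hab : a 0 < b 0)
    (h : det2 (b - a) (c - b) = 0) :
    yIntercept (chordSlope a b) c = yIntercept (chordSlope a b) b := by
  have : b 0 - a 0 ≠ 0 := (sub_pos.2 hab).ne'
  simp only [det2, PiLp.sub_apply] at h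
  simp only [yIntercept_apply, chordSlope]
  field_simp
  linarith

theorem LeftOf.hasSlopedTransversal_or_orients {A B C : Set Plane} (hAB : LeftOf A B)
    (hA : IsPreconnected A) (hB : IsPreconnected B) (hC : IsPreconnected C) :
    HasSlopedTransversal {A, B, C} ∨ Orients 1 A B C ∨ Orients (-1) A B C := by
  rcases exists_eq_or_forall_lt_or_forall_gt (hA.prod (hB.prod hC)) (f := fun _ => (0 : ℝ))
    (g := fun z => det2 (z.2.1 - z.1) (z.2.2 - z.2.1)) continuousOn_const
    (by simp only [det2, PiLp.sub_apply]; fun_prop)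
    with ⟨⟨a, b, c⟩, ⟨ha, hb, hc⟩, h⟩ | h | h
  · have hlt := hAB a ha b hb
    refine .inl ⟨chordSlope a b, yIntercept (chordSlope a b) b, ?_⟩
    simp only [mem_insert_iff, mem_singleton_iff, forall_eq_or_imp, forall_eq]
    exact ⟨⟨a, ha, (chordSlope_eq_iff hlt).1 rfl⟩, ⟨b, hb, rfl⟩, c, hc,
      yIntercept_chordSlope_of_det2_eq_zero hlt h.symm⟩
  · exact .inr <| .inl fun a ha b hb c hc => by simpa using h (a, b, c) ⟨ha, hb, hc⟩
  · exact .inr <| .inr fun a ha b hb c hc => by simpa using h (a, b, c) ⟨ha, hb, hc⟩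

theorem isLinearMap_det2_left (v : Plane) : IsLinearMap ℝ fun u => det2 u v where
  map_add u w := by simp only [det2, PiLp.add_apply]; ring
  map_smul c u := by simp only [det2, PiLp.smul_apply, smul_eq_mul]; ring

theorem isLinearMap_det2_right (u : Plane) : IsLinearMap ℝ fun v => det2 u v where
  map_add v w := by simp only [det2, PiLp.add_apply]; ring
  map_smul c v := by simp only [det2, PiLp.smul_apply, smul_eq_mul]; ring

theorem convex_setOf_pos_mul_det2_left (σ : ℝ) (p v : Plane) :
    Convex ℝ {q | 0 < σ * det2 (p - q) v} := by
  simp only [(isLinearMap_det2_left v).map_sub, mul_sub, sub_pos]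
  exact convex_halfSpace_lt (σ • (isLinearMap_det2_left v).mk' _).isLinear (σ * det2 p v)

theorem convex_setOf_pos_mul_det2_right (σ : ℝ) (p v : Plane) :
    Convex ℝ {q | 0 < σ * det2 v (q - p)} := by
  simp only [(isLinearMap_det2_right v).map_sub, mul_sub, sub_pos]
  exact convex_halfSpace_gt (σ • (isLinearMap_det2_right v).mk' _).isLinear (σ * det2 v p)

theorem det2_eq_zero_of_mem_segment {p q r : Plane} (h : p ∈ segment ℝ q r) :
    det2 (p - q) (r - p) = 0 := by
  obtain ⟨a, b, -, -, hab, rfl⟩ := h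
  obtain rfl := eq_sub_of_add_eq hab
  simp only [det2, PiLp.sub_apply, PiLp.add_apply, PiLp.smul_apply, smul_eq_mul]
  ring

theorem notMem_convexHull_union {σ : ℝ} {p : Plane} {L R : Set Plane} (hL : LeftOf L {p})
    (hR : LeftOf {p} R) (hLR : Orients σ L {p} R) : p ∉ convexHull ℝ (L ∪ R) := by
  intro hp
  have hlin : IsLinearMap ℝ fun q : Plane => q 0 := ⟨fun _ _ => rfl, fun _ _ => rfl⟩
  rcases L.eq_empty_or_nonempty with rfl | hLne
  · rw [empty_union] at hp
    exact lt_irrefl (p 0) <| convexHull_min (hR p rfl) (convex_halfSpace_gt hlin (p 0)) hp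
  rcases R.eq_empty_or_nonempty with rfl | hRne
  · rw [union_empty] at hp
    exact lt_irrefl (p 0) <|
      convexHull_min (fun q hq => hL q hq p rfl) (convex_halfSpace_lt hlin (p 0)) hp
  rw [convexHull_union hLne hRne, mem_convexJoin] at hp
  obtain ⟨l, hl, r, hr, hpr⟩ := hp
  have hlr' : ∀ r ∈ R, 0 < σ * det2 (p - l) (r - p) := fun r hr =>
    convexHull_min (fun l hl => hLR l hl p rfl r hr) (convex_setOf_pos_mul_det2_left σ p (r - p)) hl
  have hlr : 0 < σ * det2 (p - l) (r - p) :=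
    convexHull_min hlr' (convex_setOf_pos_mul_det2_right σ p (p - l)) hr
  simp [det2_eq_zero_of_mem_segment hpr] at hlr

/-- Read from left to right, all triples of members of `G` have the orientation of `σ`: the members
are arranged along a convex (`0 < σ`) or concave (`σ < 0`) chain. -/
def HasOrientation (σ : ℝ) (G : Set (Set Plane)) : Prop :=
  ∀ A ∈ G, ∀ B ∈ G, ∀ C ∈ G, LeftOf A B → LeftOf B C → Orients σ A B C

theorem HasOrientation.convexPos {σ : ℝ} {G : Set (Set Plane)} (h : HasOrientation σ G)
    (hne : ∀ A ∈ G, A.Nonempty) (hlr : G.Pairwise XSeparated) :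
    ConvexPos G := by
  intro A hA hhull
  obtain ⟨p, hp⟩ := hne A hA
  have hp' : p ∈ convexHull ℝ (⋃₀ (G \ {A})) := hhull ▸ subset_convexHull ℝ _ ⟨A, hA, hp⟩
  have hsub : ⋃₀ (G \ {A}) ⊆ ⋃₀ {B ∈ G | LeftOf B A} ∪ ⋃₀ {C ∈ G | LeftOf A C} := by
    rintro q ⟨B, ⟨hB, hBA⟩, hq⟩
    exact (hlr hB hA hBA).imp (fun h => ⟨B, ⟨hB, h⟩, hq⟩) fun h => ⟨B, ⟨hB, h⟩, hq⟩
  refine notMem_convexHull_union (σ := σ) ?_ ?_ ?_ (convexHull_mono hsub hp')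
  · rintro b ⟨B, ⟨-, hBA⟩, hb⟩ q rfl
    exact hBA b hb q hp
  · rintro q rfl c ⟨C, ⟨-, hAC⟩, hc⟩
    exact hAC q hp c hc
  · rintro b ⟨B, ⟨hB, hBA⟩, hb⟩ q rfl c ⟨C, ⟨hC, hAC⟩, hc⟩
    exact h B hB A hA C hC hBA hAC b hb q hp c hc

theorem Orients.hasOrientation {σ : ℝ} {A B C : Set Plane} (h : Orients σ A B C)
    (hA : A.Nonempty) (hB : B.Nonempty) (hC : C.Nonempty) (hAB : LeftOf A B) (hBC : LeftOf B C) :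
    HasOrientation σ {A, B, C} := by
  have hAC := hAB.trans hBC hB
  have hAA := fun h : LeftOf A A => h.ne hA rfl
  have hBB := fun h : LeftOf B B => h.ne hB rfl
  have hCC := fun h : LeftOf C C => h.ne hC rfl
  have hBA := hAB.asymm hA hB
  have hCB := hBC.asymm hB hC
  have hCA := hAC.asymm hA hC
  rintro X (rfl | rfl | rfl) Y (rfl | rfl | rfl) Z (rfl | rfl | rfl) hXY hYZ <;>
    first | exact h | contradiction

/-! ### Ramsey's theorem for families of connected sets -/

theorem hasSlopedTransversal_or_hasOrientation {e : Finset (Set Plane)}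
    (hconn : ∀ A ∈ e, IsConnected A) (he : e.card = 3) :
    HasSlopedTransversal (e : Set (Set Plane)) ∨ HasOrientation 1 (e : Set (Set Plane)) ∨
      HasOrientation (-1) (e : Set (Set Plane)) := by
  classical
  by_cases hchain : ∃ A ∈ e, ∃ B ∈ e, ∃ C ∈ e, LeftOf A B ∧ LeftOf B C
  · obtain ⟨A, hA, B, hB, C, hC, hAB, hBC⟩ := hchain
    have hAn := (hconn A hA).nonempty
    have hBn := (hconn B hB).nonempty
    have hABC : {A, B, C} = e := by
      refine Finset.eq_of_subset_of_card_le (by simp [Finset.insert_subset_iff, hA, hB, hC]) ?_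
      rw [he, Finset.card_eq_three.2 ⟨A, B, C, hAB.ne hAn, (hAB.trans hBC hBn).ne hAn,
        hBC.ne hBn, rfl⟩]
    have hor {σ : ℝ} (h : Orients σ A B C) : HasOrientation σ (e : Set (Set Plane)) := by
      simpa [← hABC] using h.hasOrientation hAn hBn (hconn C hC).nonempty hAB hBC
    have := hAB.hasSlopedTransversal_or_orients (hconn A hA).isPreconnected
      (hconn B hB).isPreconnected (hconn C hC).isPreconnected
    exact this.imp (by simp [← hABC]) (Or.imp hor hor)
  · exact .inr <| .inl fun A hA B hB C hC hAB hBC =>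
      absurd ⟨A, hA, B, hB, C, hC, hAB, hBC⟩ hchain

theorem hasOrientation_of_forall_card_eq_three {σ : ℝ} {s : Finset (Set Plane)}
    (hne : ∀ A ∈ s, A.Nonempty)
    (h : ∀ e ⊆ s, e.card = 3 → HasOrientation σ (e : Set (Set Plane))) :
    HasOrientation σ (s : Set (Set Plane)) := by
  classical
  intro A hA B hB C hC hAB hBC
  have hcard : ({A, B, C} : Finset (Set Plane)).card = 3 :=
    Finset.card_eq_three.2 ⟨A, B, C, hAB.ne (hne A hA), (hAB.trans hBC (hne B hB)).ne (hne A hA),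
      hBC.ne (hne B hB), rfl⟩
  exact h {A, B, C} (by simp_all [Finset.insert_subset_iff]) hcard A (by simp) B (by simp)
    C (by simp) hAB hBC

theorem exists_transversalLine_of_forall_card_eq_three {s : Finset (Set Plane)}
    (hs : 3 ≤ s.card) (hconn : ∀ A ∈ s, IsConnected A)
    (hlr : (s : Set (Set Plane)).Pairwise XSeparated)
    (h : ∀ e ⊆ s, e.card = 3 → HasSlopedTransversal (e : Set (Set Plane))) :
    ∃ L : AffineSubspace ℝ Plane, TransversalLine L s := by
  classical
  refine exists_transversalLine_of_forall_hasSlopedTransversal hconn hlr ?_ s.finite_toSet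
  intro A hA B hB C hC
  obtain ⟨e, hABCe, hes, he⟩ := Finset.exists_subsuperset_card_eq (s := {A, B, C}) (t := s)
    (by simp_all [Finset.insert_subset_iff]) Finset.card_le_three hs
  exact (h e hes he).mono (by simpa using Finset.coe_subset.2 hABCe)

theorem xCoord_image_inter_nonempty_or_pairwise_xSeparated {e : Finset (Set Plane)}
    (hconn : ∀ A ∈ e, IsConnected A) (he : e.card = 2) :
    (∀ A ∈ e, ∀ B ∈ e, (xCoord '' A ∩ xCoord '' B).Nonempty) ∨
      (e : Set (Set Plane)).Pairwise XSeparated := by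
  classical
  obtain ⟨A, B, -, rfl⟩ := Finset.card_eq_two.1 he
  have hA := hconn A (by simp)
  have hB := hconn B (by simp)
  refine (xCoord_image_inter_nonempty_or_xSeparated hA.isPreconnected hB.isPreconnected).imp
    (fun h => ?_) fun h => ?_
  · simp only [Finset.mem_insert, Finset.mem_singleton, forall_eq_or_imp, forall_eq, inter_self,
      image_nonempty]
    exact ⟨⟨hA.nonempty, h⟩, inter_comm (xCoord '' A) _ ▸ h, hB.nonempty⟩
  · simpa [pairwise_pair] using fun _ => ⟨h, h.symm⟩

theorem exists_subset_transversalLine_or_pairwise_xSeparated (t n : ℕ) :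
    ∃ N : ℕ, ∀ s : Finset (Set Plane), N ≤ s.card → (∀ A ∈ s, IsConnected A) →
      (∃ u ⊆ s, u.card = t ∧ ∃ L : AffineSubspace ℝ Plane, TransversalLine L u) ∨
      ∃ u ⊆ s, u.card = n ∧
        (u : Set (Set Plane)).Pairwise XSeparated := by
  classical
  obtain ⟨N, hN⟩ := exists_subset_forall_of_forall_exists (α := Set Plane) 2 ![t, n]
  refine ⟨N, fun s hs hconn => ?_⟩
  obtain ⟨i, u, hus, hu, h⟩ := hN
    ![fun e => ∀ A ∈ e, ∀ B ∈ e, (xCoord '' A ∩ xCoord '' B).Nonempty,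
      fun e => (e : Set (Set Plane)).Pairwise XSeparated] s hs
    fun e hes he => by
      simpa [Fin.exists_fin_succ] using
        xCoord_image_inter_nonempty_or_pairwise_xSeparated (fun A hA => hconn A (hes hA)) he
  replace hconn : ∀ A ∈ u, IsConnected A := fun A hA => hconn A (hus hA)
  fin_cases i
  · refine .inl ⟨u, hus, hu, exists_transversalLine_of_pairwise_image_inter_nonempty xCoord_ne_zero
      u.finite_toSet (fun A hA => (hconn A hA).isPreconnected) fun A hA B hB => ?_⟩
    rcases eq_or_ne A B with rfl | hne
    · simpa using (hconn A hA).nonempty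
    · exact h {A, B} (by simp_all [Finset.insert_subset_iff]) (Finset.card_pair hne) A (by simp)
        B (by simp)
  · refine .inr ⟨u, hus, hu, fun A hA B hB hne => ?_⟩
    exact h {A, B} (by simp_all [Finset.insert_subset_iff]) (Finset.card_pair hne) (by simp)
      (by simp) hne

theorem exists_subset_transversalLine_or_convexPos_of_pairwise_xSeparated (t n : ℕ) :
    ∃ N : ℕ, ∀ s : Finset (Set Plane), N ≤ s.card → (∀ A ∈ s, IsConnected A) →
      (s : Set (Set Plane)).Pairwise XSeparated →
      (∃ u ⊆ s, u.card = t ∧ ∃ L : AffineSubspace ℝ Plane, TransversalLine L u) ∨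
      ∃ u ⊆ s, u.card = n ∧ ConvexPos u := by
  obtain ⟨N, hN⟩ := exists_subset_forall_of_forall_exists (α := Set Plane) 3 ![max 3 t, n, n]
  refine ⟨N, fun s hs hconn hlr => ?_⟩
  have hconvex {σ : ℝ} {u : Finset (Set Plane)} (hus : u ⊆ s)
      (h : ∀ e ⊆ u, e.card = 3 → HasOrientation σ (e : Set (Set Plane))) : ConvexPos u :=
    have hne : ∀ A ∈ u, A.Nonempty := fun A hA => (hconn A (hus hA)).nonempty
    (hasOrientation_of_forall_card_eq_three hne h).convexPos hne (hlr.mono (by simpa))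
  obtain ⟨i, u, hus, hu, h⟩ := hN ![fun e => HasSlopedTransversal e, fun e => HasOrientation 1 e,
    fun e => HasOrientation (-1) e] s hs fun e hes he => by
      simpa [Fin.exists_fin_succ] using
        hasSlopedTransversal_or_hasOrientation (fun A hA => hconn A (hes hA)) he
  fin_cases i
  · obtain ⟨L, hL⟩ := exists_transversalLine_of_forall_card_eq_three
      ((le_max_left 3 t).trans_eq hu.symm) (fun A hA => hconn A (hus hA)) (hlr.mono (by simpa)) h
    obtain ⟨v, hvu, hv⟩ := Finset.exists_subset_card_eq ((le_max_right 3 t).trans_eq hu.symm)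
    exact .inl ⟨v, hvu.trans hus, hv, L, hL.1, fun A hA => hL.2 A (hvu hA)⟩
  · exact .inr ⟨u, hus, hu, hconvex hus h⟩
  · exact .inr ⟨u, hus, hu, hconvex hus h⟩

theorem exists_finset_subset_card_eq {α : Type*} {F : Set α} {N : ℕ} (h : N ≤ F.encard) :
    ∃ s : Finset α, (s : Set α) ⊆ F ∧ s.card = N := by
  obtain ⟨G, hGF, hG⟩ := exists_subset_encard_eq h
  obtain ⟨s, rfl⟩ := (finite_of_encard_eq_coe hG).exists_finset_coe
  exact ⟨s, hGF, by simpa using hG⟩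

theorem line_transversal_or_convex_position_general :
    ∀ t n : ℕ, ∃ h : ℕ, ∀ F : Set (Set Plane), h < F.encard → (∀ A ∈ F, IsConnected A) →
      (∃ G ⊆ F, G.ncard = t ∧ ∃ L : AffineSubspace ℝ Plane, TransversalLine L G) ∨
      (∃ G ⊆ F, G.ncard = n ∧ ConvexPos G) := by
  intro t n
  obtain ⟨M, hM⟩ := exists_subset_transversalLine_or_convexPos_of_pairwise_xSeparated t n
  obtain ⟨N, hN⟩ := exists_subset_transversalLine_or_pairwise_xSeparated t M
  refine ⟨N, fun F hF hconn => ?_⟩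
  obtain ⟨s, hsF, hs⟩ := exists_finset_subset_card_eq hF.le
  have hlift {P : Set (Set Plane) → Prop} {k : ℕ} : (∃ u ⊆ s, u.card = k ∧ P u) →
      ∃ G ⊆ F, G.ncard = k ∧ P G := fun ⟨u, hus, hu, hP⟩ =>
    ⟨u, (Finset.coe_subset.2 hus).trans hsF, (ncard_coe_finset u).trans hu, hP⟩
  have hsconn : ∀ A ∈ s, IsConnected A := fun A hA => hconn A (hsF hA)
  rcases hN s hs.ge hsconn with h | ⟨v, hvs, hv, hlr⟩
  · exact .inl (hlift h)
  have hsub {P : Finset (Set Plane) → Prop} : (∃ u ⊆ v, P u) → ∃ u ⊆ s, P u :=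
    fun ⟨u, huv, hu⟩ => ⟨u, huv.trans hvs, hu⟩
  exact (hM v hv.ge (fun A hA => hsconn A (hvs hA)) hlr).imp (hlift ∘ hsub) (hlift ∘ hsub)

/-- Among sufficiently many convex bodies in the plane there are `t` with a common
transversal line or `n` in convex position. -/
theorem line_transversal_or_convex_position :
    ∀ t n : ℕ, 3 ≤ t → 3 ≤ n → ∃ h : ℕ, ∀ F : Set (Set Plane), F.Finite → h < F.ncard →
      (∀ A ∈ F, ConvexBody2 A) →
      (∃ G ⊆ F, G.ncard = t ∧ ∃ L : AffineSubspace ℝ Plane, TransversalLine L G) ∨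
      (∃ G ⊆ F, G.ncard = n ∧ ConvexPos G) := by
  intro t n _ _
  exact (line_transversal_or_convex_position_general t n).imp fun h H F hF hcard hbody =>
    H F (hF.cast_ncard_eq ▸ Nat.cast_lt.2 hcard)
      fun A hA => ⟨(hbody A hA).1, (hbody A hA).2.2.isPreconnected⟩
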